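/- arXiv:1808.00285 — 2 statements merged into one kernel-verified Lean document; each statement's English description precedes it below -/
import Mathlib

section
/- Let 1 ≤ m < M, let A, B be positive invertible bounded operators on a complex Hilbert space H with m·A ≤ B ≤ M·A, let φ : B(H) → B(K) be a positive linear map such that φ(A) is positive and invertible, and let t < 0. Then (1/H(m,M,t)) · φ(A !_t B) ≤ (1/H(m,M,t)) · φ(A σ_g B) ≤ φ(A) !_t φ(B) ≤ φ(A) σ_g φ(B) ≤ H(m,M,t) · φ(A !_t B), where g(x) = ((1 !_t M)^{x-m} (1 !_t m)^{M-x})^{1/(M-m)}, for scalars 1 !_t x = (1 − t + t/x)^{-1}, and H(m,M,t) = [(1−t)² + (t/(mM))·(2(1−t)√(mM) + t)] · (1 !_t m) · (1 !_t M). -/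
/-!
Write `f x = 1 !_t x`, let `g` be its log-linear interpolation between `m` and `M`, and let `L` be
its chord over `[m, M]`. On `[m, M]` the scalar inequalities `f ≤ g ≤ L ≤ H(m, M, t) f` hold:
`f` is log-convex because `t < 0` (`scalarHarm_le_interp`), `g ≤ L` is AM-GM (`interp_le_chord`),
and `H(m, M, t)` is the maximum of `L / f`, attained at `√(m M)`
(`chord_le_mul_scalarHarm`).

Since `A^{-1/2} B A^{-1/2}` has spectrum in `[m, M]`, each inequality transfers to the means `σ`
(`opSigma_mono`), for `(A, B)` and equally for `(φ A, φ B)`, because `m φ(A) ≤ φ(B) ≤ M φ(A)`. The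
harmonic mean is `σ_f` (`opHarm_eq_opSigma`), and `σ_L` is a linear combination of its arguments
(`opSigma_affine`), so `φ(A σ_L B) = φ(A) σ_L φ(B)`. Passing through `σ_L` yields both estimates
that compare a mean of images with an image of a mean.
-/

noncomputable def opSqrt {H : Type*} [NormedAddCommGroup H] [InnerProductSpace ℂ H]
    [CompleteSpace H] (A : H →L[ℂ] H) : H →L[ℂ] H :=
  cfc (fun s : ℝ => s ^ ((1 : ℝ) / 2)) A

noncomputable def opInvSqrt {H : Type*} [NormedAddCommGroup H] [InnerProductSpace ℂ H]
    [CompleteSpace H] (A : H →L[ℂ] H) : H →L[ℂ] H :=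
  cfc (fun s : ℝ => s ^ (-(1 : ℝ) / 2)) A

/-- `A δ B = A^{-1/2} B A^{-1/2}`. -/
noncomputable def opDelta {H : Type*} [NormedAddCommGroup H] [InnerProductSpace ℂ H]
    [CompleteSpace H] (A B : H →L[ℂ] H) : H →L[ℂ] H :=
  opInvSqrt A * B * opInvSqrt A

/-- `A σ_h B = A^{1/2} h(A^{-1/2} B A^{-1/2}) A^{1/2}`. -/
noncomputable def opSigma {H : Type*} [NormedAddCommGroup H] [InnerProductSpace ℂ H]
    [CompleteSpace H] (h : ℝ → ℝ) (A B : H →L[ℂ] H) : H →L[ℂ] H :=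
  opSqrt A * cfc h (opDelta A B) * opSqrt A

/-- The weighted harmonic mean `A !_t B = ((1-t) A⁻¹ + t B⁻¹)⁻¹`. -/
noncomputable def opHarm {H : Type*} [NormedAddCommGroup H] [InnerProductSpace ℂ H]
    [CompleteSpace H] (t : ℝ) (A B : H →L[ℂ] H) : H →L[ℂ] H :=
  Ring.inverse ((1 - t) • Ring.inverse A + t • Ring.inverse B)

/-- The scalar weighted harmonic mean `1 !_t x = (1 - t + t/x)⁻¹`. -/
noncomputable def scalarHarm (t x : ℝ) : ℝ := (1 - t + t / x)⁻¹

section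

variable {H : Type*} [NormedAddCommGroup H] [InnerProductSpace ℂ H] [CompleteSpace H]

/-! ### Square roots of a positive invertible operator -/

lemma spectrum_pos {A : H →L[ℂ] H} (hA : 0 ≤ A) (hAu : IsUnit A) {x : ℝ}
    (hx : x ∈ spectrum ℝ A) : 0 < x := by
  refine lt_of_le_of_ne (spectrum_nonneg_of_nonneg hA hx) ?_
  rintro rfl
  exact (spectrum.zero_notMem ℝ hAu) hx

lemma continuousOn_rpow_spectrum {A : H →L[ℂ] H} (hA : 0 ≤ A) (hAu : IsUnit A) (p : ℝ) :
    ContinuousOn (fun s : ℝ => s ^ p) (spectrum ℝ A) := fun _ hx =>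
  (Real.continuousAt_rpow_const _ _ (Or.inl (spectrum_pos hA hAu hx).ne')).continuousWithinAt

lemma opSqrt_mul_opInvSqrt {A : H →L[ℂ] H} (hA : 0 ≤ A) (hAu : IsUnit A) :
    opSqrt A * opInvSqrt A = 1 := by
  have hs : IsSelfAdjoint A := .of_nonneg hA
  rw [opSqrt, opInvSqrt, ← cfc_mul _ _ A (continuousOn_rpow_spectrum hA hAu _)
    (continuousOn_rpow_spectrum hA hAu _), ← cfc_one ℝ A]
  refine cfc_congr fun x hx => ?_
  have := spectrum_pos hA hAu hx
  simp only [← Real.rpow_add this]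
  norm_num

lemma opInvSqrt_mul_opSqrt {A : H →L[ℂ] H} (hA : 0 ≤ A) (hAu : IsUnit A) :
    opInvSqrt A * opSqrt A = 1 := by
  rw [opInvSqrt, opSqrt, cfc_commute_cfc]
  exact opSqrt_mul_opInvSqrt hA hAu

lemma opSqrt_mul_self {A : H →L[ℂ] H} (hA : 0 ≤ A) (hAu : IsUnit A) :
    opSqrt A * opSqrt A = A := by
  have hs : IsSelfAdjoint A := .of_nonneg hA
  rw [opSqrt, ← cfc_mul _ _ A (continuousOn_rpow_spectrum hA hAu _)
    (continuousOn_rpow_spectrum hA hAu _)]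
  conv_rhs => rw [← cfc_id ℝ A]
  refine cfc_congr fun x hx => ?_
  have := spectrum_pos hA hAu hx
  simp only [← Real.rpow_add this]
  norm_num

lemma opSqrt_isSelfAdjoint (A : H →L[ℂ] H) : IsSelfAdjoint (opSqrt A) := cfc_predicate _ A

lemma opInvSqrt_isSelfAdjoint (A : H →L[ℂ] H) : IsSelfAdjoint (opInvSqrt A) := cfc_predicate _ A

lemma opInvSqrt_conj {A : H →L[ℂ] H} (hA : 0 ≤ A) (hAu : IsUnit A) :
    opInvSqrt A * A * opInvSqrt A = 1 := by
  calc opInvSqrt A * A * opInvSqrt A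
      _ = opInvSqrt A * (opSqrt A * opSqrt A) * opInvSqrt A := by rw [opSqrt_mul_self hA hAu]
      _ = 1 := by
        rw [← mul_assoc, opInvSqrt_mul_opSqrt hA hAu, one_mul, opSqrt_mul_opInvSqrt hA hAu]

lemma opSqrt_conj_opDelta {A : H →L[ℂ] H} (hA : 0 ≤ A) (hAu : IsUnit A) (B : H →L[ℂ] H) :
    opSqrt A * opDelta A B * opSqrt A = B := by
  rw [opDelta, ← mul_assoc, ← mul_assoc, opSqrt_mul_opInvSqrt hA hAu, one_mul, mul_assoc,
    opInvSqrt_mul_opSqrt hA hAu, mul_one]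

lemma opDelta_isSelfAdjoint {A B : H →L[ℂ] H} (hB : 0 ≤ B) : IsSelfAdjoint (opDelta A B) :=
  .of_nonneg ((opInvSqrt_isSelfAdjoint A).conjugate_nonneg hB)

/-! ### Operator means from functions on `[m, M]` -/

/-- Conjugating `m A ≤ B ≤ M A` by `A^{-1/2}` gives `m ≤ A^{-1/2} B A^{-1/2} ≤ M`. -/
lemma spectrum_opDelta_subset {A B : H →L[ℂ] H} {m M : ℝ} (hA : 0 ≤ A) (hAu : IsUnit A)
    (hB : 0 ≤ B) (h1 : m • A ≤ B) (h2 : B ≤ M • A) :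
    spectrum ℝ (opDelta A B) ⊆ Set.Icc m M := by
  have hs := opDelta_isSelfAdjoint (A := A) hB
  have key (c : ℝ) : opInvSqrt A * (c • A) * opInvSqrt A = algebraMap ℝ (H →L[ℂ] H) c := by
    rw [mul_smul_comm, smul_mul_assoc, opInvSqrt_conj hA hAu, Algebra.algebraMap_eq_smul_one]
  have l1 := (opInvSqrt_isSelfAdjoint A).conjugate_le_conjugate h1
  have l2 := (opInvSqrt_isSelfAdjoint A).conjugate_le_conjugate h2
  rw [key] at l1 l2
  intro x hx
  exact ⟨(algebraMap_le_iff_le_spectrum (a := opDelta A B)).1 l1 x hx,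
    (le_algebraMap_iff_spectrum_le (a := opDelta A B)).1 l2 x hx⟩

/-- Order in the representing function transfers to `σ`. -/
lemma opSigma_mono {A B : H →L[ℂ] H} {m M : ℝ} (hA : 0 ≤ A) (hAu : IsUnit A)
    (hB : 0 ≤ B) (h1 : m • A ≤ B) (h2 : B ≤ M • A) {f g : ℝ → ℝ}
    (hf : ContinuousOn f (Set.Icc m M)) (hg : ContinuousOn g (Set.Icc m M))
    (hfg : ∀ x ∈ Set.Icc m M, f x ≤ g x) : opSigma f A B ≤ opSigma g A B := by
  have hsub := spectrum_opDelta_subset hA hAu hB h1 h2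
  exact (opSqrt_isSelfAdjoint A).conjugate_le_conjugate
    (cfc_mono (fun x hx => hfg x (hsub hx)) (hf.mono hsub) (hg.mono hsub))

lemma opSigma_affine {A B : H →L[ℂ] H} (hA : 0 ≤ A) (hAu : IsUnit A) (hB : 0 ≤ B) (a b : ℝ) :
    opSigma (fun x => a * x + b) A B = a • B + b • A := by
  have hs := opDelta_isSelfAdjoint (A := A) hB
  have : cfc (fun x : ℝ => a * x + b) (opDelta A B) = a • opDelta A B + b • 1 := by
    rw [cfc_add_const b (fun x => a * x) (opDelta A B), cfc_const_mul_id a (opDelta A B),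
      Algebra.algebraMap_eq_smul_one]
  rw [opSigma, this]
  simp only [mul_add, add_mul, mul_smul_comm, smul_mul_assoc, mul_one]
  rw [opSqrt_conj_opDelta hA hAu, opSqrt_mul_self hA hAu]

lemma opSigma_const_mul {A B : H →L[ℂ] H} {m M : ℝ} (hA : 0 ≤ A) (hAu : IsUnit A)
    (hB : 0 ≤ B) (h1 : m • A ≤ B) (h2 : B ≤ M • A) {f : ℝ → ℝ}
    (hf : ContinuousOn f (Set.Icc m M)) (c : ℝ) :
    opSigma (fun x => c * f x) A B = c • opSigma f A B := by
  rw [opSigma, cfc_const_mul c f _ (hf.mono (spectrum_opDelta_subset hA hAu hB h1 h2)),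
    mul_smul_comm, smul_mul_assoc, opSigma]

/-! ### The harmonic mean as an operator mean -/

lemma scalarHarm_base_pos {t x : ℝ} (ht : t < 0) (hx : 1 ≤ x) : 0 < 1 - t + t / x := by
  have h0 : 0 < x := by linarith
  have : 1 - t + t / x = ((1 - t) * (x - 1) + 1) / x := by field_simp; ring
  rw [this]
  have : 0 ≤ (1 - t) * (x - 1) := mul_nonneg (by linarith) (by linarith)
  positivity

lemma continuousOn_scalarHarm {t m M : ℝ} (ht : t < 0) (hm : 1 ≤ m) :
    ContinuousOn (scalarHarm t) (Set.Icc m M) := by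
  unfold scalarHarm
  refine ContinuousOn.inv₀ (continuousOn_const.add (continuousOn_const.div continuousOn_id ?_)) ?_
  · intro x hx; linarith [hx.1]
  · intro x hx; exact (scalarHarm_base_pos ht (hm.trans hx.1)).ne'

/-- The harmonic mean is the `σ` of its scalar representing function: with `X = A^{-1/2} B A^{-1/2}`
one has `(1 - t) A⁻¹ + t B⁻¹ = A^{-1/2} (1 - t + t X⁻¹) A^{-1/2}`. -/
lemma opHarm_eq_opSigma {A B : H →L[ℂ] H} {m M t : ℝ} (hm : 1 ≤ m) (ht : t < 0) (hA : 0 ≤ A)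
    (hAu : IsUnit A) (hB : 0 ≤ B) (h1 : m • A ≤ B) (h2 : B ≤ M • A) :
    opHarm t A B = opSigma (scalarHarm t) A B := by
  have hsub := spectrum_opDelta_subset hA hAu hB h1 h2
  have hs := opDelta_isSelfAdjoint (A := A) hB
  have hpos : ∀ x ∈ spectrum ℝ (opDelta A B), 1 ≤ x := fun x hx => hm.trans (hsub hx).1
  have hST := opSqrt_mul_opInvSqrt hA hAu
  have hTS := opInvSqrt_mul_opSqrt hA hAu
  have hSS := opSqrt_mul_self hA hAu
  have hSXS := opSqrt_conj_opDelta hA hAu B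
  -- Conjugation by `S = A^{1/2}` inverts to conjugation by `T = A^{-1/2}`.
  have inv_conj (Y Z : H →L[ℂ] H) (hYZ : Y * Z = 1) (hZY : Z * Y = 1) :
      Ring.inverse (opSqrt A * Y * opSqrt A) = opInvSqrt A * Z * opInvSqrt A ∧
      Ring.inverse (opInvSqrt A * Y * opInvSqrt A) = opSqrt A * Z * opSqrt A := by
    set S := opSqrt A
    set T := opInvSqrt A
    have e (S T Y Z : H →L[ℂ] H) (hST : S * T = 1) (hYZ : Y * Z = 1) :
        (S * Y * S) * (T * Z * T) = 1 := by
      calc (S * Y * S) * (T * Z * T) = S * Y * (S * T) * Z * T := by simp only [mul_assoc]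
        _ = S * (Y * Z) * T := by rw [hST, mul_one, mul_assoc S]
        _ = 1 := by rw [hYZ, mul_one, hST]
    exact ⟨Ring.inverse_unit ⟨_, _, e S T Y Z hST hYZ, e T S Z Y hTS hZY⟩,
      Ring.inverse_unit ⟨_, _, e T S Y Z hTS hYZ, e S T Z Y hST hZY⟩⟩
  set X := opDelta A B with hX
  have cinv : ContinuousOn (fun x : ℝ => x⁻¹) (spectrum ℝ X) :=
    continuousOn_id.inv₀ fun x hx => by simp only [id]; linarith [hpos x hx]
  have hXX : X * cfc (fun x : ℝ => x⁻¹) X = 1 := by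
    have := cfc_mul (fun x : ℝ => x) (fun x : ℝ => x⁻¹) X continuousOn_id cinv
    rw [cfc_id' ℝ X] at this
    rw [← this, ← cfc_one ℝ X]
    exact cfc_congr fun x hx => mul_inv_cancel₀ (by linarith [hpos x hx])
  have hXX' : cfc (fun x : ℝ => x⁻¹) X * X = 1 := by
    have := cfc_mul (fun x : ℝ => x⁻¹) (fun x : ℝ => x) X cinv continuousOn_id
    rw [cfc_id' ℝ X] at this
    rw [← this, ← cfc_one ℝ X]
    exact cfc_congr fun x hx => inv_mul_cancel₀ (by linarith [hpos x hx])
  have hAi : Ring.inverse A = opInvSqrt A * 1 * opInvSqrt A := by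
    rw [← (inv_conj 1 1 (one_mul 1) (one_mul 1)).1, mul_one, hSS]
  have hBi : Ring.inverse B = opInvSqrt A * cfc (fun x : ℝ => x⁻¹) X * opInvSqrt A := by
    rw [← (inv_conj X _ hXX hXX').1, hSXS]
  have cbase : ContinuousOn (fun x : ℝ => t * x⁻¹ + (1 - t)) (spectrum ℝ X) :=
    (continuousOn_const.mul cinv).add continuousOn_const
  have hbase : cfc (fun x : ℝ => t * x⁻¹ + (1 - t)) X
      = t • cfc (fun x : ℝ => x⁻¹) X + (1 - t) • 1 := by
    rw [cfc_add_const (1 - t) (fun x => t * x⁻¹) X (continuousOn_const.mul cinv),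
      cfc_const_mul t (fun x => x⁻¹) X cinv, Algebra.algebraMap_eq_smul_one]
  have cf : ContinuousOn (scalarHarm t) (spectrum ℝ X) :=
    (continuousOn_scalarHarm ht hm).mono hsub
  have hsum : (1 - t) • Ring.inverse A + t • Ring.inverse B
      = opInvSqrt A * cfc (fun x : ℝ => t * x⁻¹ + (1 - t)) X * opInvSqrt A := by
    rw [hAi, hBi, hbase]
    simp only [mul_add, add_mul, mul_smul_comm, smul_mul_assoc]
    rw [add_comm]
  have p1 : ∀ x ∈ spectrum ℝ X, (t * x⁻¹ + (1 - t)) * scalarHarm t x = 1 := fun x hx => by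
    have := scalarHarm_base_pos ht (hpos x hx)
    rw [scalarHarm, show t * x⁻¹ + (1 - t) = 1 - t + t / x by rw [div_eq_mul_inv]; ring]
    exact mul_inv_cancel₀ this.ne'
  rw [opHarm, hsum, (inv_conj _ (cfc (scalarHarm t) X) ?_ ?_).2, opSigma]
  · rw [← cfc_mul _ _ X cbase cf, ← cfc_one ℝ X]
    exact cfc_congr p1
  · rw [← cfc_mul _ _ X cf cbase, ← cfc_one ℝ X]
    exact cfc_congr fun x hx => (mul_comm _ _).trans (p1 x hx)

/-! ### Scalar inequalities -/

lemma scalarHarm_pos {t x : ℝ} (ht : t < 0) (hx : 1 ≤ x) : 0 < scalarHarm t x :=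
  inv_pos.2 (scalarHarm_base_pos ht hx)

/-- The log-linear interpolation is a weighted geometric mean of the end values. -/
lemma interp_eq {a b m M x : ℝ} (ha : 0 < a) (hb : 0 < b) :
    (a ^ (x - m) * b ^ (M - x)) ^ (1 / (M - m))
      = a ^ ((x - m) / (M - m)) * b ^ ((M - x) / (M - m)) := by
  rw [Real.mul_rpow (by positivity) (by positivity), ← Real.rpow_mul ha.le,
    ← Real.rpow_mul hb.le, mul_one_div, mul_one_div]

lemma continuous_interp {a b m M : ℝ} (ha : 0 < a) (hb : 0 < b) :
    Continuous fun x : ℝ => (a ^ (x - m) * b ^ (M - x)) ^ (1 / (M - m)) := by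
  refine Continuous.rpow_const (.mul ?_ ?_) fun x => Or.inl (by positivity)
  · exact (continuous_const.rpow (continuous_id.sub continuous_const) fun _ => Or.inl ha.ne')
  · exact (continuous_const.rpow (continuous_const.sub continuous_id) fun _ => Or.inl hb.ne')

/-- Log-convexity of `1 !_t x`, via AM-GM for the reciprocals and convexity of `1 / x`. -/
lemma scalarHarm_le_interp {t m M x : ℝ} (hm : 1 ≤ m) (hmM : m < M) (ht : t < 0)
    (hx : x ∈ Set.Icc m M) : scalarHarm t x ≤
      (scalarHarm t M ^ (x - m) * scalarHarm t m ^ (M - x)) ^ (1 / (M - m)) := by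
  obtain ⟨h1, h2⟩ := hx
  have hM : 0 < M - m := by linarith
  have bM := scalarHarm_base_pos ht (hm.trans hmM.le)
  have bm := scalarHarm_base_pos ht hm
  have bx := scalarHarm_base_pos ht (hm.trans h1)
  rw [interp_eq (scalarHarm_pos ht (hm.trans hmM.le)) (scalarHarm_pos ht hm)]
  unfold scalarHarm
  rw [Real.inv_rpow bM.le, Real.inv_rpow bm.le, ← mul_inv]
  refine inv_anti₀ (by positivity) ?_
  refine (Real.geom_mean_le_arith_mean2_weighted (div_nonneg (by linarith) hM.le)
    (div_nonneg (by linarith) hM.le) bM.le bm.le (by field_simp; ring)).trans ?_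
  have hx0 : 0 < x := by linarith
  have hm0 : 0 < m := by linarith
  have hM0 : 0 < M := by linarith
  have e : 1 - t + t / x - ((x - m) / (M - m) * (1 - t + t / M) + (M - x) / (M - m) * (1 - t + t / m))
      = (-t) * ((x - m) * (M - x)) / (x * m * M) := by
    have := hM.ne'
    field_simp
    ring
  have : 0 ≤ (-t) * ((x - m) * (M - x)) / (x * m * M) :=
    div_nonneg (mul_nonneg (by linarith) (mul_nonneg (by linarith) (by linarith))) (by positivity)
  linarith

/-- AM-GM bounds the interpolation by the chord of `1 !_t x` over `[m, M]`, whose slope is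
`t / (m M)` and intercept `1 - t`, both times `(1 !_t m) (1 !_t M)`. -/
lemma interp_le_chord {t m M x : ℝ} (hm : 1 ≤ m) (hmM : m < M) (ht : t < 0)
    (hx : x ∈ Set.Icc m M) :
    (scalarHarm t M ^ (x - m) * scalarHarm t m ^ (M - x)) ^ (1 / (M - m)) ≤
      (t / (m * M) * (scalarHarm t m * scalarHarm t M)) * x
        + (1 - t) * (scalarHarm t m * scalarHarm t M) := by
  obtain ⟨h1, h2⟩ := hx
  have hM : 0 < M - m := by linarith
  have pM := scalarHarm_pos ht (hm.trans hmM.le)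
  have pm := scalarHarm_pos ht hm
  have bM := (scalarHarm_base_pos ht (hm.trans hmM.le)).ne'
  have bm := (scalarHarm_base_pos ht hm).ne'
  rw [interp_eq pM pm]
  refine (Real.geom_mean_le_arith_mean2_weighted (div_nonneg (by linarith) hM.le)
    (div_nonneg (by linarith) hM.le) pM.le pm.le (by field_simp; ring)).trans (le_of_eq ?_)
  have hm0 : m ≠ 0 := by linarith
  have hM0 : M ≠ 0 := by linarith
  have hn := hM.ne'
  have eM : scalarHarm t M = scalarHarm t m * scalarHarm t M * (1 - t + t / m) := by
    unfold scalarHarm; rw [mul_right_comm, inv_mul_cancel₀ bm, one_mul]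
  have em : scalarHarm t m = scalarHarm t m * scalarHarm t M * (1 - t + t / M) := by
    unfold scalarHarm; rw [mul_assoc, inv_mul_cancel₀ bM, mul_one]
  set p := scalarHarm t m * scalarHarm t M
  rw [eM, em]
  field_simp
  ring

/-- The ratio of the chord to `1 !_t x` depends on `x` through `t (1 - t) (x + m M / x)` only, hence
is largest at `x = √(m M)`; that value is the constant `H(m, M, t)`. -/
lemma chord_le_mul_scalarHarm {t m M x : ℝ} (hm : 1 ≤ m) (hmM : m < M) (ht : t < 0)
    (hx : x ∈ Set.Icc m M) :
    (t / (m * M) * (scalarHarm t m * scalarHarm t M)) * x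
        + (1 - t) * (scalarHarm t m * scalarHarm t M) ≤
      (((1 - t) ^ 2 + t / (m * M) * (2 * (1 - t) * Real.sqrt (m * M) + t)) *
        scalarHarm t m * scalarHarm t M) * scalarHarm t x := by
  obtain ⟨h1, h2⟩ := hx
  have hx0 : 0 < x := by linarith
  have hm0 : 0 < m := by linarith
  have hM0 : 0 < M := by linarith
  have pM := scalarHarm_pos ht (hm.trans hmM.le)
  have pm := scalarHarm_pos ht hm
  have bx := scalarHarm_base_pos ht (hm.trans h1)
  have hr : Real.sqrt (m * M) ^ 2 = m * M := Real.sq_sqrt (by positivity)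
  rw [mul_assoc _ (scalarHarm t m)]
  set p := scalarHarm t m * scalarHarm t M with hp
  have pp : 0 < p := mul_pos pm pM
  set r := Real.sqrt (m * M)
  have hr0 : 0 < r := Real.sqrt_pos.2 (by positivity)
  rw [← hr]
  have hfx : scalarHarm t x = (1 - t + t / x)⁻¹ := rfl
  rw [hfx, ← div_eq_mul_inv, le_div_iff₀ bx]
  have e : ((1 - t) ^ 2 + t / r ^ 2 * (2 * (1 - t) * r + t)) * p
      - (t / r ^ 2 * p * x + (1 - t) * p) * (1 - t + t / x)
      = (-t) * (1 - t) * (x - r) ^ 2 * p / (r ^ 2 * x) := by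
    field_simp
    ring
  have : 0 ≤ (-t) * (1 - t) * (x - r) ^ 2 * p / (r ^ 2 * x) := by
    have a1 : 0 < -t := by linarith
    have a2 : 0 < 1 - t := by linarith
    positivity
  linarith

end

theorem harmonic_mean_bounds_for_positive_map
    {H K : Type*} [NormedAddCommGroup H] [InnerProductSpace ℂ H] [CompleteSpace H]
    [NormedAddCommGroup K] [InnerProductSpace ℂ K] [CompleteSpace K]
    (m M : ℝ) (hm : 1 ≤ m) (hmM : m < M)
    (A B : H →L[ℂ] H) (hA : 0 ≤ A) (hAu : IsUnit A) (hB : 0 ≤ B) (hBu : IsUnit B)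
    (hmAB : m • A ≤ B) (hBMA : B ≤ M • A)
    (φ : (H →L[ℂ] H) →ₗ[ℂ] (K →L[ℂ] K))
    (hφ_pos : ∀ X : H →L[ℂ] H, 0 ≤ X → 0 ≤ φ X)
    (hφA : 0 ≤ φ A) (hφAu : IsUnit (φ A))
    (t : ℝ) (ht : t < 0)
    (Hc : ℝ)
    (hHc : Hc = ((1 - t) ^ 2 + t / (m * M) * (2 * (1 - t) * Real.sqrt (m * M) + t)) *
      scalarHarm t m * scalarHarm t M) :
    Hc⁻¹ • φ (opHarm t A B) ≤
        Hc⁻¹ • φ (opSigma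
          (fun x : ℝ => (scalarHarm t M ^ (x - m) * scalarHarm t m ^ (M - x)) ^ (1 / (M - m)))
          A B) ∧
      Hc⁻¹ • φ (opSigma
          (fun x : ℝ => (scalarHarm t M ^ (x - m) * scalarHarm t m ^ (M - x)) ^ (1 / (M - m)))
          A B) ≤
        opHarm t (φ A) (φ B) ∧
      opHarm t (φ A) (φ B) ≤
        opSigma
          (fun x : ℝ => (scalarHarm t M ^ (x - m) * scalarHarm t m ^ (M - x)) ^ (1 / (M - m)))
          (φ A) (φ B) ∧
      opSigma
          (fun x : ℝ => (scalarHarm t M ^ (x - m) * scalarHarm t m ^ (M - x)) ^ (1 / (M - m)))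
          (φ A) (φ B) ≤
        Hc • φ (opHarm t A B) := by
  have hM1 : 1 ≤ M := hm.trans hmM.le
  have pM := scalarHarm_pos ht hM1
  have pm := scalarHarm_pos ht hm
  set g : ℝ → ℝ :=
    fun x => (scalarHarm t M ^ (x - m) * scalarHarm t m ^ (M - x)) ^ (1 / (M - m)) with hg
  set a : ℝ := t / (m * M) * (scalarHarm t m * scalarHarm t M) with ha
  set b : ℝ := (1 - t) * (scalarHarm t m * scalarHarm t M) with hb
  have cg : ContinuousOn g (Set.Icc m M) := (continuous_interp pM pm).continuousOn
  have cf : ContinuousOn (scalarHarm t) (Set.Icc m M) := continuousOn_scalarHarm ht hm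
  have cL : ContinuousOn (fun x : ℝ => a * x + b) (Set.Icc m M) := by fun_prop
  have cHf : ContinuousOn (fun x : ℝ => Hc * scalarHarm t x) (Set.Icc m M) :=
    continuousOn_const.mul cf
  have fg : ∀ x ∈ Set.Icc m M, scalarHarm t x ≤ g x :=
    fun x hx => scalarHarm_le_interp hm hmM ht hx
  have gL : ∀ x ∈ Set.Icc m M, g x ≤ a * x + b := fun x hx => interp_le_chord hm hmM ht hx
  have LH : ∀ x ∈ Set.Icc m M, a * x + b ≤ Hc * scalarHarm t x := fun x hx => by
    rw [hHc]; exact chord_le_mul_scalarHarm hm hmM ht hx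
  have hHpos : 0 < Hc := by
    have hmm : m ∈ Set.Icc m M := ⟨le_rfl, hmM.le⟩
    have h := ((fg m hmm).trans (gL m hmm)).trans (LH m hmm)
    nlinarith
  have φmono {X Y : H →L[ℂ] H} (h : X ≤ Y) : φ X ≤ φ Y := by
    have := hφ_pos (Y - X) (sub_nonneg.2 h)
    rwa [map_sub, sub_nonneg] at this
  have φsmul (c : ℝ) (X : H →L[ℂ] H) : φ (c • X) = c • φ X := φ.map_smul_of_tower c X
  have hφB : 0 ≤ φ B := hφ_pos B hB
  have h1 : m • φ A ≤ φ B := by rw [← φsmul]; exact φmono hmAB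
  have h2 : φ B ≤ M • φ A := by rw [← φsmul]; exact φmono hBMA
  have hchord : φ (opSigma (fun x => a * x + b) A B)
      = opSigma (fun x => a * x + b) (φ A) (φ B) := by
    rw [opSigma_affine hA hAu hB, opSigma_affine hφA hφAu hφB, map_add, φsmul, φsmul]
  rw [opHarm_eq_opSigma hm ht hA hAu hB hmAB hBMA, opHarm_eq_opSigma hm ht hφA hφAu hφB h1 h2]
  refine ⟨smul_le_smul_of_nonneg_left
      (φmono (opSigma_mono hA hAu hB hmAB hBMA cf cg fg)) (inv_nonneg.2 hHpos.le), ?_,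
    opSigma_mono hφA hφAu hφB h1 h2 cf cg fg, ?_⟩
  · have h := calc φ (opSigma g A B)
        _ ≤ φ (opSigma (fun x => a * x + b) A B) :=
          φmono (opSigma_mono hA hAu hB hmAB hBMA cg cL gL)
        _ = opSigma (fun x => a * x + b) (φ A) (φ B) := hchord
        _ ≤ opSigma (fun x => Hc * scalarHarm t x) (φ A) (φ B) :=
          opSigma_mono hφA hφAu hφB h1 h2 cL cHf LH
        _ = Hc • opSigma (scalarHarm t) (φ A) (φ B) :=
          opSigma_const_mul hφA hφAu hφB h1 h2 cf Hc
    have h' := smul_le_smul_of_nonneg_left h (inv_nonneg.2 hHpos.le)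
    rwa [inv_smul_smul₀ hHpos.ne'] at h'
  · calc opSigma g (φ A) (φ B)
        _ ≤ opSigma (fun x => a * x + b) (φ A) (φ B) :=
          opSigma_mono hφA hφAu hφB h1 h2 cg cL gL
        _ = φ (opSigma (fun x => a * x + b) A B) := hchord.symm
        _ ≤ φ (opSigma (fun x => Hc * scalarHarm t x) A B) :=
          φmono (opSigma_mono hA hAu hB hmAB hBMA cL cHf LH)
        _ = Hc • φ (opSigma (scalarHarm t) A B) := by
          rw [opSigma_const_mul hA hAu hB hmAB hBMA cf, φsmul]
end

section
/- Let 0 < m < M, let f : [m,M] → (0,∞) be continuous and log-convex, let t₀ ∈ (m,M) be a point where f is differentiable with f′(t₀) ≠ 0, let A be a bounded self-adjoint operator on a complex Hilbert space H with mI ≤ A ≤ MI, and let φ : B(H) → B(K) be a normalized positive linear map. Define k(t) = exp[(f′(t₀)/f(t₀))·(t − t₀)] on [m,M], and for t₁ ∈ (m,M) set α = α(k,t₁) and β = β(k,t₁). Then φ(f(A)) ≥ (f(t₀)/α) · exp[(f′(t₀)/f(t₀))·(φ(A) − t₀·I)] − (β/α)·f(t₀)·I. -/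
/-!
Write `c = f'(t₀) / f(t₀)`, so that `c` is the derivative of `log f` at `t₀` and `k t = exp (c (t - t₀))`.
An affine function separates the two sides of the claimed inequality: with
`ℓ t = f(t₀) (k t₁ + k'(t₁) (t - t₁))`,

* `ℓ ≤ f` on `[m, M]`: log-convexity gives `f ≥ f(t₀) k` (tangent line of `log f` at `t₀`, exponentiated),
  and `k` lies above its tangent line at `t₁` (`tangent_le_of_logConvex`);
* `(f(t₀) / α) k - (β / α) f(t₀) ≤ ℓ` on `[m, M]`: since `α > 0`, this rearranges to the statement that `k`
  lies below its chord `a_k t + b_k` (`mp_le_tangent`).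

Because `φ` is linear, positive and unital, it sends `ℓ(A)` to `ℓ(φ A)`, and `φ A` again has spectrum in
`[m, M]`. Functional calculus then gives `φ (f(A)) ≥ φ (ℓ(A)) = ℓ(φ A) ≥ (f(t₀) / α) k(φ A) - (β / α) f(t₀)`.
-/

/-- `a_g` for `g` on `[c,d]`. -/
noncomputable def chordSlope (c d : ℝ) (g : ℝ → ℝ) : ℝ := (g d - g c) / (d - c)

/-- `b_g` for `g` on `[c,d]`. -/
noncomputable def chordIntercept (c d : ℝ) (g : ℝ → ℝ) : ℝ := (d * g c - c * g d) / (d - c)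

/-- `α(g,s) = a_g / g′(s)`. -/
noncomputable def mpAlpha (c d : ℝ) (g : ℝ → ℝ) (s : ℝ) : ℝ :=
  chordSlope c d g / deriv g s

/-- `β(g,s) = a_g·s + b_g − a_g·g(s)/g′(s)`. -/
noncomputable def mpBeta (c d : ℝ) (g : ℝ → ℝ) (s : ℝ) : ℝ :=
  chordSlope c d g * s + chordIntercept c d g - chordSlope c d g * g s / deriv g s

/-- A convex function lies above its tangent line at any point of the set where it is differentiable. -/
lemma ConvexOn.tangent_le {g : ℝ → ℝ} {S : Set ℝ} (hg : ConvexOn ℝ S g) {x y d : ℝ}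
    (hx : x ∈ S) (hy : y ∈ S) (hd : HasDerivAt g d x) : g x + d * (y - x) ≤ g y := by
  rcases lt_trichotomy x y with h | h | h
  · have h1 := hg.le_slope_of_hasDerivAt hx hy h hd
    rw [slope_def_field, le_div_iff₀ (by linarith)] at h1
    linarith
  · subst h; simp
  · have h1 := hg.slope_le_of_hasDerivAt hy hx h hd
    rw [slope_def_field, div_le_iff₀ (by linarith)] at h1
    linarith

lemma tangent_le_of_logConvex {m M : ℝ} {f : ℝ → ℝ} (hf_pos : ∀ t ∈ Set.Icc m M, 0 < f t)
    (hf : ConvexOn ℝ (Set.Icc m M) (fun t => Real.log (f t))) {t₀ : ℝ}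
    (ht₀ : t₀ ∈ Set.Icc m M) (hdiff : DifferentiableAt ℝ f t₀) (t₁ : ℝ) {t : ℝ}
    (ht : t ∈ Set.Icc m M) :
    f t₀ * (Real.exp (deriv f t₀ / f t₀ * (t₁ - t₀)) +
      deriv f t₀ / f t₀ * Real.exp (deriv f t₀ / f t₀ * (t₁ - t₀)) * (t - t₁)) ≤ f t := by
  have h0 := hf_pos t₀ ht₀
  have h := hf.tangent_le ht₀ ht (hdiff.hasDerivAt.log h0.ne')
  set c := deriv f t₀ / f t₀
  have h2 : f t₀ * Real.exp (c * (t - t₀)) ≤ f t := by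
    rw [← Real.exp_log (hf_pos t ht), ← Real.exp_log h0, ← Real.exp_add]
    simpa using h
  refine le_trans (mul_le_mul_of_nonneg_left ?_ h0.le) h2
  have h3 : Real.exp (c * (t - t₀)) = Real.exp (c * (t₁ - t₀)) * Real.exp (c * (t - t₁)) := by
    rw [← Real.exp_add]; ring_nf
  rw [h3]
  nlinarith [Real.add_one_le_exp (c * (t - t₁)), Real.exp_pos (c * (t₁ - t₀))]

lemma exp_le_chord {m M : ℝ} (hmM : m < M) (c t₀ : ℝ) {s : ℝ} (hs : s ∈ Set.Icc m M) :
    Real.exp (c * (s - t₀)) ≤ chordSlope m M (fun t => Real.exp (c * (t - t₀))) * s +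
      chordIntercept m M (fun t => Real.exp (c * (t - t₀))) := by
  have hD : 0 < M - m := by linarith
  have h := convexOn_exp.2 (Set.mem_univ (c * (m - t₀))) (Set.mem_univ (c * (M - t₀)))
    (div_nonneg (by linarith [hs.2] : 0 ≤ M - s) hD.le)
    (div_nonneg (by linarith [hs.1] : 0 ≤ s - m) hD.le) (by field_simp; ring)
  simp only [smul_eq_mul] at h
  have e : (M - s) / (M - m) * (c * (m - t₀)) + (s - m) / (M - m) * (c * (M - t₀)) =
      c * (s - t₀) := by field_simp; ring
  rw [e] at h
  refine h.trans (le_of_eq ?_)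
  unfold chordSlope chordIntercept
  field_simp
  ring

/-- The slope of the chord of `t ↦ exp (c (t - t₀))` has the sign of `c`. -/
lemma chordSlope_exp_div_pos {m M : ℝ} (hmM : m < M) {c : ℝ} (hc : c ≠ 0) (t₀ : ℝ) :
    0 < chordSlope m M (fun t => Real.exp (c * (t - t₀))) / c := by
  have hD : 0 < M - m := by linarith
  unfold chordSlope
  rcases hc.lt_or_gt with h | h
  · refine div_pos_of_neg_of_neg (div_neg_of_neg_of_pos (sub_neg.2 (Real.exp_lt_exp.2 ?_)) hD) h
    nlinarith
  · refine div_pos (div_pos (sub_pos.2 (Real.exp_lt_exp.2 ?_)) hD) h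
    nlinarith

lemma mp_le_tangent {m M : ℝ} (hmM : m < M) {c : ℝ} (hc : c ≠ 0) (t₀ t₁ : ℝ) {F : ℝ}
    (hF : 0 < F) {s : ℝ} (hs : s ∈ Set.Icc m M) :
    F / mpAlpha m M (fun t => Real.exp (c * (t - t₀))) t₁ * Real.exp (c * (s - t₀)) -
      mpBeta m M (fun t => Real.exp (c * (t - t₀))) t₁ /
        mpAlpha m M (fun t => Real.exp (c * (t - t₀))) t₁ * F ≤
    F * (Real.exp (c * (t₁ - t₀)) + c * Real.exp (c * (t₁ - t₀)) * (s - t₁)) := by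
  have hchord := exp_le_chord hmM c t₀ hs
  have hpos := chordSlope_exp_div_pos hmM hc t₀
  have hd : deriv (fun t => Real.exp (c * (t - t₀))) t₁ = c * Real.exp (c * (t₁ - t₀)) := by
    have h : HasDerivAt (fun t => Real.exp (c * (t - t₀))) (Real.exp (c * (t₁ - t₀)) * (c * 1)) t₁ :=
      (((hasDerivAt_id t₁).sub_const t₀).const_mul c).exp
    rw [h.deriv]; ring
  unfold mpBeta mpAlpha
  beta_reduce
  rw [hd]
  have hE := Real.exp_pos (c * (t₁ - t₀))
  generalize Real.exp (c * (t₁ - t₀)) = E at *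
  generalize Real.exp (c * (s - t₀)) = G at *
  generalize chordSlope m M (fun t => Real.exp (c * (t - t₀))) = a at *
  generalize chordIntercept m M (fun t => Real.exp (c * (t - t₀))) = b at *
  have ha : a ≠ 0 := by rintro rfl; simp at hpos
  have hα : 0 < a / (c * E) := by rw [← div_div]; exact div_pos hpos hE
  -- The difference of the two sides is `F / α` times the gap between the chord and `exp`.
  have key : F * (E + c * E * (s - t₁)) - (F / (a / (c * E)) * G -
      (a * t₁ + b - a * E / (c * E)) / (a / (c * E)) * F) =
      F / (a / (c * E)) * (a * s + b - G) := by
    field_simp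
    ring
  have := mul_nonneg (div_pos hF hα).le (sub_nonneg.2 hchord)
  linarith

section Operators

variable {H : Type*} [NormedAddCommGroup H] [InnerProductSpace ℂ H] [CompleteSpace H]

lemma spectrum_subset_Icc_of_le {A : H →L[ℂ] H} (hA : IsSelfAdjoint A) {m M : ℝ}
    (h₁ : m • (1 : H →L[ℂ] H) ≤ A) (h₂ : A ≤ M • (1 : H →L[ℂ] H)) :
    spectrum ℝ A ⊆ Set.Icc m M := by
  intro x hx
  rw [← Algebra.algebraMap_eq_smul_one] at h₁ h₂
  exact ⟨(algebraMap_le_iff_le_spectrum (a := A)).1 h₁ x hx,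
    (le_algebraMap_iff_spectrum_le (a := A)).1 h₂ x hx⟩

lemma cfc_affine {A : H →L[ℂ] H} (hA : IsSelfAdjoint A) (p q : ℝ) :
    cfc (fun t : ℝ => p * t + q) A = p • A + q • (1 : H →L[ℂ] H) := by
  rw [cfc_add_const q (fun t : ℝ => p * t) A, cfc_const_mul_id p A, Algebra.algebraMap_eq_smul_one]

end Operators

theorem exponential_lower_bound_map_side
    {H K : Type*} [NormedAddCommGroup H] [InnerProductSpace ℂ H] [CompleteSpace H]
    [NormedAddCommGroup K] [InnerProductSpace ℂ K] [CompleteSpace K]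
    (m M : ℝ) (hm : 0 < m) (hmM : m < M)
    (f : ℝ → ℝ) (hf_cont : ContinuousOn f (Set.Icc m M))
    (hf_pos : ∀ t ∈ Set.Icc m M, 0 < f t)
    (hf_logconv : ConvexOn ℝ (Set.Icc m M) (fun t => Real.log (f t)))
    (t₀ : ℝ) (ht₀ : t₀ ∈ Set.Ioo m M) (hdiff : DifferentiableAt ℝ f t₀)
    (hderiv : deriv f t₀ ≠ 0)
    (A : H →L[ℂ] H) (hA : IsSelfAdjoint A)
    (hA₁ : m • (1 : H →L[ℂ] H) ≤ A) (hA₂ : A ≤ M • (1 : H →L[ℂ] H))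
    (φ : (H →L[ℂ] H) →ₗ[ℂ] (K →L[ℂ] K))
    (hφ_pos : ∀ X : H →L[ℂ] H, 0 ≤ X → 0 ≤ φ X)
    (hφ_one : φ 1 = 1)
    (k : ℝ → ℝ)
    (hk : ∀ t, k t = Real.exp (deriv f t₀ / f t₀ * (t - t₀)))
    (t₁ : ℝ) (ht₁ : t₁ ∈ Set.Ioo m M) :
    (f t₀ / mpAlpha m M k t₁) •
          cfc (fun t : ℝ => Real.exp (deriv f t₀ / f t₀ * (t - t₀))) (φ A) -
        (mpBeta m M k t₁ / mpAlpha m M k t₁ * f t₀) • 1 ≤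
      φ (cfc f A) := by
  have ht₀' := Set.Ioo_subset_Icc_self ht₀
  have hf₀ := hf_pos t₀ ht₀'
  obtain rfl : k = fun t => Real.exp (deriv f t₀ / f t₀ * (t - t₀)) := funext hk
  have hlow := fun t ht => tangent_le_of_logConvex (t := t) hf_pos hf_logconv ht₀' hdiff t₁ ht
  have hup := fun s hs =>
    mp_le_tangent (s := s) hmM (div_ne_zero hderiv hf₀.ne') t₀ t₁ hf₀ hs
  set c := deriv f t₀ / f t₀
  set α := mpAlpha m M (fun t => Real.exp (c * (t - t₀))) t₁
  set β := mpBeta m M (fun t => Real.exp (c * (t - t₀))) t₁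
  set E := Real.exp (c * (t₁ - t₀))
  -- The separating affine function in the form `p t + q`.
  obtain ⟨p, q, hpq⟩ : ∃ p q : ℝ, ∀ t, f t₀ * (E + c * E * (t - t₁)) = p * t + q :=
    ⟨f t₀ * c * E, f t₀ * (E - c * E * t₁), fun t => by ring⟩
  simp only [hpq] at hlow hup
  have hmono : ∀ X Y : H →L[ℂ] H, X ≤ Y → φ X ≤ φ Y := fun X Y h => by
    have := hφ_pos (Y - X) (sub_nonneg.2 h)
    rwa [map_sub, sub_nonneg] at this
  have hsmul : ∀ (r : ℝ) (X : H →L[ℂ] H), φ (r • X) = r • φ X :=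
    fun r X => φ.map_smul_of_tower r X
  have hB₁ : m • (1 : K →L[ℂ] K) ≤ φ A := by
    have := hmono _ _ hA₁
    rwa [hsmul, hφ_one] at this
  have hB₂ : φ A ≤ M • (1 : K →L[ℂ] K) := by
    have := hmono _ _ hA₂
    rwa [hsmul, hφ_one] at this
  -- `m > 0` makes `A` positive, so `φ A` is positive and in particular self-adjoint.
  have hB : IsSelfAdjoint (φ A) :=
    IsSelfAdjoint.of_nonneg (hφ_pos A ((smul_nonneg hm.le zero_le_one).trans hA₁))
  have hspA := spectrum_subset_Icc_of_le hA hA₁ hA₂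
  have hspB := spectrum_subset_Icc_of_le hB hB₁ hB₂
  calc (f t₀ / α) • cfc (fun t : ℝ => Real.exp (c * (t - t₀))) (φ A) - (β / α * f t₀) • 1
      = cfc (fun t : ℝ => f t₀ / α * Real.exp (c * (t - t₀)) - β / α * f t₀) (φ A) := by
        rw [cfc_sub (fun t : ℝ => f t₀ / α * Real.exp (c * (t - t₀))) (fun _ => β / α * f t₀) (φ A)
            (by fun_prop) (by fun_prop),
          cfc_const_mul (f t₀ / α) (fun t : ℝ => Real.exp (c * (t - t₀))) (φ A) (by fun_prop),
          cfc_const (β / α * f t₀) (φ A), Algebra.algebraMap_eq_smul_one]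
    _ ≤ cfc (fun t : ℝ => p * t + q) (φ A) :=
        cfc_mono (fun s hs => hup s (hspB hs)) (by fun_prop) (by fun_prop)
    _ = φ (cfc (fun t : ℝ => p * t + q) A) := by
        rw [cfc_affine hB, cfc_affine hA, map_add, hsmul, hsmul, hφ_one]
    _ ≤ φ (cfc f A) :=
        hmono _ _ (cfc_mono (fun t ht => hlow t (hspA ht)) (by fun_prop) (hf_cont.mono hspA))
end
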